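/- Let (x^\star, t^\star) be an optimal solution of the Eisenberg–Gale program: minimize \sum_{i=1}^n -w_i \log t_i over x \in \mathbb{R}^{n\times m}, t \in \mathbb{R}^n subject to \sum_{i=1}^n x_{ij} = 1 for every j, t_i = \sum_{j=1}^m u_{ij} x_{ij} for every i, x_{ij} \ge 0, t_i > 0. Then (x^\star, t^\star) is also an optimal solution of the modified program in which the objective is replaced by its second-order Taylor expansion at t^\star, namely minimize \sum_{i=1}^n \big[-w_i \log t^\star_i - \frac{w_i}{t^\star_i}(t_i - t^\star_i) + \frac{w_i}{2 (t^\star_i)^2}(t_i - t^\star_i)^2\big] over the same feasible set; moreover, the optimal t-component of the modified program is unique and equals t^\star. -/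

import Mathlib

/-!
The utility profiles attainable in the Eisenberg–Gale program form a convex set, so at an optimal
profile `t⋆` the derivative of the objective is nonnegative in every direction `t - t⋆` towards
another attainable `t`. The Taylor objective at `t` exceeds its value at `t⋆` by this derivative
plus `∑ i, w i / (2 * t⋆ i ^ 2) * (t i - t⋆ i) ^ 2`, which is positive unless `t = t⋆`. Hence `t⋆`
is the unique minimizer of the Taylor objective.
-/

open BigOperators

noncomputable section

/-- Feasibility for the Eisenberg–Gale program. -/
def EGFeasible (n m : ℕ) (u : Fin n → Fin m → ℝ)
    (x : Fin n → Fin m → ℝ) (t : Fin n → ℝ) : Prop :=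
  (∀ j, ∑ i, x i j = 1) ∧
  (∀ i, t i = ∑ j, u i j * x i j) ∧
  (∀ i j, 0 ≤ x i j) ∧
  (∀ i, 0 < t i)

/-- Objective of the Eisenberg–Gale program (in minimization form). -/
def EGObj (n : ℕ) (w : Fin n → ℝ) (t : Fin n → ℝ) : ℝ :=
  ∑ i, -(w i) * Real.log (t i)

/-- The second-order Taylor expansion of the Eisenberg–Gale objective at `t⋆`. -/
def EGObjTaylor (n : ℕ) (w : Fin n → ℝ) (tstar : Fin n → ℝ) (t : Fin n → ℝ) : ℝ :=
  ∑ i, (-(w i) * Real.log (tstar i) - w i / tstar i * (t i - tstar i) +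
    w i / (2 * (tstar i) ^ 2) * (t i - tstar i) ^ 2)

lemma sum_mul_sq_pos {ι R : Type*} [Fintype ι] [Ring R] [LinearOrder R] [IsStrictOrderedRing R]
    {c v : ι → R} (hc : ∀ i, 0 < c i) (hv : v ≠ 0) : 0 < ∑ i, c i * v i ^ 2 := by
  obtain ⟨k, hk⟩ := Function.ne_iff.mp hv
  exact Finset.sum_pos' (fun i _ => mul_nonneg (hc i).le (sq_nonneg (v i)))
    ⟨k, Finset.mem_univ k, mul_pos (hc k) (even_two.pow_pos hk)⟩

/-- The utility profiles `t` that some allocation `x` attains in the Eisenberg–Gale program, that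
is, the projection of its feasible set to the `t`-component, on which alone the objectives
depend. -/
def EGAttainable (n m : ℕ) (u : Fin n → Fin m → ℝ) : Set (Fin n → ℝ) :=
  {t | ∃ x, EGFeasible n m u x t}

lemma convex_EGAttainable (n m : ℕ) (u : Fin n → Fin m → ℝ) : Convex ℝ (EGAttainable n m u) := by
  rintro t ⟨x, hx_sum, ht_eq, hx_nonneg, ht_pos⟩ r ⟨y, hy_sum, hr_eq, hy_nonneg, hr_pos⟩
    a b ha hb hab
  refine ⟨a • x + b • y, fun j => ?_, fun i => ?_, fun i j => ?_, fun i => ?_⟩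
  · simp [Finset.sum_add_distrib, ← Finset.mul_sum, hx_sum, hy_sum, hab]
  · simp [ht_eq, hr_eq, mul_add, Finset.sum_add_distrib, Finset.mul_sum, mul_left_comm]
  · exact add_nonneg (mul_nonneg ha (hx_nonneg i j)) (mul_nonneg hb (hy_nonneg i j))
  · exact convex_Ioi (0 : ℝ) (ht_pos i) (hr_pos i) ha hb hab

section Objective

variable {n : ℕ} {w a t : Fin n → ℝ}

lemma hasFDerivAt_EGObj (ha : ∀ i, a i ≠ 0) :
    HasFDerivAt (EGObj n w) (∑ i, -(w i / a i) • (.proj i : (Fin n → ℝ) →L[ℝ] ℝ)) a := by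
  unfold EGObj
  refine HasFDerivAt.fun_sum fun i _ => ?_
  refine (((hasFDerivAt_apply i a).log (ha i)).const_mul (-(w i))).congr_fderiv ?_
  rw [smul_smul, div_eq_mul_inv, neg_mul]

lemma EGObjTaylor_self (w a : Fin n → ℝ) : EGObjTaylor n w a a = EGObj n w a := by
  simp [EGObjTaylor, EGObj]

lemma EGObjTaylor_eq_add_fderiv_add_sum_sq (ha : ∀ i, a i ≠ 0) :
    EGObjTaylor n w a t = EGObj n w a + fderiv ℝ (EGObj n w) a (t - a) +
      ∑ i, w i / (2 * a i ^ 2) * (t - a) i ^ 2 := by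
  rw [(hasFDerivAt_EGObj ha).fderiv]
  simp [EGObjTaylor, EGObj, Finset.sum_add_distrib, sub_eq_add_neg]

lemma EGObjTaylor_self_lt_of_isLocalMinOn {K : Set (Fin n → ℝ)} (hw : ∀ i, 0 < w i)
    (ha_pos : ∀ i, 0 < a i) (hK : StarConvex ℝ a K) (hmin : IsLocalMinOn (EGObj n w) K a)
    (ht : t ∈ K) (hta : t ≠ a) : EGObjTaylor n w a a < EGObjTaylor n w a t := by
  have ha_ne : ∀ i, a i ≠ 0 := fun i => (ha_pos i).ne'
  have hfirst : 0 ≤ fderiv ℝ (EGObj n w) a (t - a) :=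
    hmin.hasFDerivWithinAt_nonneg
      (hasFDerivAt_EGObj ha_ne).differentiableAt.hasFDerivAt.hasFDerivWithinAt
      (sub_mem_posTangentConeAt_of_segment_subset (hK.segment_subset ht))
  have hsecond : 0 < ∑ i, w i / (2 * a i ^ 2) * (t - a) i ^ 2 :=
    sum_mul_sq_pos (fun i => div_pos (hw i) (mul_pos two_pos (pow_pos (ha_pos i) 2)))
      (sub_ne_zero.mpr hta)
  rw [EGObjTaylor_self, EGObjTaylor_eq_add_fderiv_add_sum_sq ha_ne]
  linarith

/-- Minimality is only asked near `a` because `Real.log` takes junk values off the positive orthant,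
where `K` may extend. -/
theorem eg_taylor_modified_program_general {K : Set (Fin n → ℝ)}
    (hw : ∀ i, 0 < w i) (ha_pos : ∀ i, 0 < a i) (hK : StarConvex ℝ a K)
    (hmin : IsLocalMinOn (EGObj n w) K a) :
    IsMinOn (EGObjTaylor n w a) K a ∧
      ∀ t ∈ K, IsMinOn (EGObjTaylor n w a) K t → t = a := by
  have hlt : ∀ t ∈ K, t ≠ a → EGObjTaylor n w a a < EGObjTaylor n w a t := fun _ =>
    EGObjTaylor_self_lt_of_isLocalMinOn hw ha_pos hK hmin
  refine ⟨isMinOn_iff.mpr fun t ht => ?_, fun t ht htmin => ?_⟩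
  · obtain rfl | hta := eq_or_ne t a
    · exact le_rfl
    · exact (hlt t ht hta).le
  · by_contra hta
    exact (hlt t ht hta).not_ge (htmin (hK.mem ⟨t, ht⟩))

end Objective

/-- An optimal solution `(x⋆, t⋆)` of the Eisenberg–Gale program is also optimal for
the program with the objective replaced by its second-order Taylor expansion at `t⋆`;
moreover, the optimal `t`-component of the modified program is unique and equals `t⋆`. -/
theorem eg_taylor_modified_program (n m : ℕ) (u : Fin n → Fin m → ℝ) (w : Fin n → ℝ)
    (hu : ∀ i j, 0 ≤ u i j)
    (hrow : ∀ i, ∃ j, 0 < u i j)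
    (hcol : ∀ j, ∃ i, 0 < u i j)
    (hw : ∀ i, 0 < w i)
    (xstar : Fin n → Fin m → ℝ) (tstar : Fin n → ℝ)
    (hfeas : EGFeasible n m u xstar tstar)
    (hopt : ∀ x t, EGFeasible n m u x t → EGObj n w tstar ≤ EGObj n w t) :
    (∀ x t, EGFeasible n m u x t →
      EGObjTaylor n w tstar tstar ≤ EGObjTaylor n w tstar t) ∧
    (∀ x t, EGFeasible n m u x t →
      (∀ x' t', EGFeasible n m u x' t' → EGObjTaylor n w tstar t ≤ EGObjTaylor n w tstar t') →
      t = tstar) := by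
  have hmin : IsMinOn (EGObj n w) (EGAttainable n m u) tstar := fun t ⟨x, hx⟩ => hopt x t hx
  obtain ⟨htaylor, hunique⟩ := eg_taylor_modified_program_general hw hfeas.2.2.2
    ((convex_EGAttainable n m u).starConvex ⟨xstar, hfeas⟩) hmin.localize
  exact ⟨fun x _ hx => htaylor ⟨x, hx⟩, fun x t hx ht =>
    hunique t ⟨x, hx⟩ fun t' ⟨x', hx'⟩ => ht x' t' hx'⟩

end
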